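/- (Limit of equilibrium bids in the tournament auction.) Assume the sequence setting below, and for each l let b_l : [0,v̄] → [0,∞) be strictly increasing with b_l(0) = 0 and satisfying the symmetric-equilibrium condition: for all v, ṽ ∈ [0,v̄], F(v)^{N−1}·∫₀^{min(b_l(v),w̄_l)} (v−ξ)g_l(ξ)dξ ≥ F(ṽ)^{N−1}·∫₀^{min(b_l(ṽ),w̄_l)} (v−ξ)g_l(ξ)dξ. Then for every v ∈ (0,v̄], lim_{l→∞} b_l(v) = k. -/

import Mathlib

/-!
Write `P x = ∫₀^{min x w̄} g` and `U v x = ∫₀^{min x w̄} (v - ξ) g ξ dξ` for the probability of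
beating the strong bidder and the expected second-stage payoff of a bid `x` at value `v`. All
that is needed about them is the two-sided bound `payoff_bounds`,
`(v - y) (P y - P x) ≤ U v y - U v x ≤ (v - x) (P y - P x)` for `0 ≤ x ≤ y`; in particular
`U v` increases up to `v` and decreases afterwards.

*Upper bound.* Mimicking value `0` earns nothing, so `0 ≤ U v (b v)`. Fix `v < m < k < d`. A bid
above `d` earns at most `U v d ≤ v P m + (v - m) (P d - P m)`, which tends to `v - m < 0`.

*Lower bound.* Suppose `b v ≤ c` with `v < c < k`, and let value `u = v / 2` mimic `v`, so that
`F(v)^(N-1) U u (b v) ≤ F(u)^(N-1) U u (b u)`. If `b v ≤ u` this is absurd, as the mimic gains in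
both factors. Otherwise `U u c ≤ U u (b v)`, while `U u (b u) ≤ U u u`. By the drainage hypothesis
the law of `w` conditioned on `w ≤ c` concentrates at `0`, so `U u c / P c` and `U u u / P c` have
the same positive limit, which contradicts `F(u) < F(v)`.
-/

open MeasureTheory intervalIntegral Set Filter

/-- The probability that a bid `x` beats an opponent with density `g` on `[0, w]`. -/
noncomputable def winProb (w : ℝ) (g : ℝ → ℝ) (x : ℝ) : ℝ :=
  ∫ ξ in (0:ℝ)..(min x w), g ξ

/-- The expected payoff of a bid `x` at value `v` in a second-price contest against an opponent
with density `g` on `[0, w]`. -/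
noncomputable def payoff (w : ℝ) (g : ℝ → ℝ) (v x : ℝ) : ℝ :=
  ∫ ξ in (0:ℝ)..(min x w), (v - ξ) * g ξ

section Second
variable {w : ℝ} {g : ℝ → ℝ}

lemma winProb_zero (hw : 0 < w) : winProb w g 0 = 0 := by
  simp [winProb, min_eq_left hw.le]

lemma payoff_zero (hw : 0 < w) (v : ℝ) : payoff w g v 0 = 0 := by
  simp [payoff, min_eq_left hw.le]

lemma winProb_pos (hw : 0 < w) (hc : ContinuousOn g (Icc 0 w)) (hp : ∀ x ∈ Icc 0 w, 0 < g x)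
    {x : ℝ} (hx : 0 < x) : 0 < winProb w g x := by
  have hm : 0 < min x w := lt_min hx hw
  apply intervalIntegral_pos_of_pos_on _ _ hm
  · apply ContinuousOn.intervalIntegrable
    rw [uIcc_of_le hm.le]
    exact hc.mono (Icc_subset_Icc_right (min_le_right _ _))
  · intro y hy
    exact hp y ⟨hy.1.le, hy.2.le.trans (min_le_right _ _)⟩

/-- Raising a bid from `x` to `y` adds only wins at prices between `x` and `y`. -/
lemma payoff_bounds (hw : 0 < w) (hc : ContinuousOn g (Icc 0 w)) (hp : ∀ x ∈ Icc 0 w, 0 < g x)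
    (v : ℝ) {x y : ℝ} (hx : 0 ≤ x) (hxy : x ≤ y) :
    0 ≤ winProb w g y - winProb w g x ∧
    (v - y) * (winProb w g y - winProb w g x) ≤ payoff w g v y - payoff w g v x ∧
    payoff w g v y - payoff w g v x ≤ (v - x) * (winProb w g y - winProb w g x) := by
  have hsx : 0 ≤ min x w := le_min hx hw.le
  have hst : min x w ≤ min y w := min_le_min_right _ hxy
  have hsy : 0 ≤ min y w := hsx.trans hst
  have int : ∀ h : ℝ → ℝ, ContinuousOn h (Icc 0 w) → ∀ s t, 0 ≤ s → s ≤ t → t ≤ w →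
      IntervalIntegrable h volume s t := by
    intro h hh s t hs hst ht
    apply ContinuousOn.intervalIntegrable
    rw [uIcc_of_le hst]
    exact hh.mono (Icc_subset_Icc hs ht)
  have hc' : ∀ a : ℝ, ContinuousOn (fun ξ => a * g ξ) (Icc 0 w) := fun a =>
    continuousOn_const.mul hc
  have hcv : ContinuousOn (fun ξ => (v - ξ) * g ξ) (Icc 0 w) :=
    (continuousOn_const.sub continuousOn_id).mul hc
  have hyw : min y w ≤ w := min_le_right _ _
  have hxw : min x w ≤ w := min_le_right _ _
  have eP : winProb w g y - winProb w g x = ∫ ξ in (min x w)..(min y w), g ξ :=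
    integral_interval_sub_left (int g hc _ _ le_rfl hsy hyw) (int g hc _ _ le_rfl hsx hxw)
  have eU : payoff w g v y - payoff w g v x = ∫ ξ in (min x w)..(min y w), (v - ξ) * g ξ :=
    integral_interval_sub_left (int _ hcv _ _ le_rfl hsy hyw) (int _ hcv _ _ le_rfl hsx hxw)
  have gp : ∀ ξ ∈ Icc (min x w) (min y w), 0 ≤ g ξ := fun ξ hξ =>
    (hp ξ ⟨hsx.trans hξ.1, hξ.2.trans hyw⟩).le
  rw [eP, eU]
  refine ⟨integral_nonneg hst gp, ?_, ?_⟩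
  · rw [← intervalIntegral.integral_const_mul]
    apply integral_mono_on hst (int _ (hc' _) _ _ hsx hst hyw) (int _ hcv _ _ hsx hst hyw)
    intro ξ hξ
    exact mul_le_mul_of_nonneg_right
      (by linarith [hξ.2.trans (min_le_left y w)]) (gp ξ hξ)
  · rcases le_total x w with h | h
    · rw [← intervalIntegral.integral_const_mul]
      apply integral_mono_on hst (int _ hcv _ _ hsx hst hyw) (int _ (hc' _) _ _ hsx hst hyw)
      intro ξ hξ
      refine mul_le_mul_of_nonneg_right ?_ (gp ξ hξ)
      have := hξ.1
      rw [min_eq_left h] at this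
      linarith
    -- Both bids exceed the top of the support, so both increments vanish.
    · simp [min_eq_right h, min_eq_right (h.trans hxy)]

/-- `payoff v` increases on `[0, v]`. -/
lemma payoff_le_of_le (hw : 0 < w) (hc : ContinuousOn g (Icc 0 w))
    (hp : ∀ x ∈ Icc 0 w, 0 < g x) {v x y : ℝ} (hx : 0 ≤ x) (hxy : x ≤ y) (hy : y ≤ v) :
    payoff w g v x ≤ payoff w g v y := by
  obtain ⟨h0, h1, -⟩ := payoff_bounds hw hc hp v hx hxy
  nlinarith [mul_nonneg (sub_nonneg.2 hy) h0]

/-- `payoff v` decreases on `[v, ∞)`. -/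
lemma payoff_le_of_ge (hw : 0 < w) (hc : ContinuousOn g (Icc 0 w))
    (hp : ∀ x ∈ Icc 0 w, 0 < g x) {v x y : ℝ} (hx : 0 ≤ x) (hxy : x ≤ y) (hv : v ≤ x) :
    payoff w g v y ≤ payoff w g v x := by
  obtain ⟨h0, -, h1⟩ := payoff_bounds hw hc hp v hx hxy
  nlinarith [mul_nonneg (sub_nonneg.2 hv) h0]

/-- Truthful bidding is optimal in the second stage. -/
lemma payoff_le_self (hw : 0 < w) (hc : ContinuousOn g (Icc 0 w))
    (hp : ∀ x ∈ Icc 0 w, 0 < g x) {v x : ℝ} (hv : 0 ≤ v) (hx : 0 ≤ x) :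
    payoff w g v x ≤ payoff w g v v := by
  rcases le_total x v with h | h
  · exact payoff_le_of_le hw hc hp hx h le_rfl
  · exact payoff_le_of_ge hw hc hp hv h le_rfl

lemma payoff_pos (hw : 0 < w) (hc : ContinuousOn g (Icc 0 w))
    (hp : ∀ x ∈ Icc 0 w, 0 < g x) {v x : ℝ} (hx : 0 < x) (hxv : x ≤ v) :
    0 < payoff w g v x := by
  -- Half the bid already earns a positive margin.
  have hP := winProb_pos hw hc hp (half_pos hx)
  have h := (payoff_bounds hw hc hp v le_rfl (half_pos hx).le).2.1
  rw [winProb_zero hw, payoff_zero hw, sub_zero, sub_zero] at h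
  have h' := payoff_le_of_le hw hc hp (half_pos hx).le (half_le_self hx.le) hxv
  have : 0 < (v - x / 2) * winProb w g (x / 2) := mul_pos (by linarith) hP
  linarith

end Second

/-- (Limit of equilibrium bids in the tournament auction.) In the
sequence setting — symmetric first-stage values with density `f` on `[0, v̄]`, strong
bidder values with densities `g_l` on `[0, w̄_l]` whose CDFs `G_l` converge in distribution
to an atom at `k > v̄` and drain mass away from low values slowly — if `b_l` is a strictly
increasing symmetric equilibrium bid function of the tournament auction for each `l`, then
for every `v ∈ (0, v̄]`, `b_l v → k` as `l → ∞`. -/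
theorem stmt14
    (vbar k M : ℝ) (h1 : 0 < vbar) (h2 : vbar < k) (h3 : k ≤ M)
    (f : ℝ → ℝ)
    (hf_cont : ContinuousOn f (Set.Icc 0 vbar))
    (hf_pos : ∀ x ∈ Set.Icc 0 vbar, 0 < f x)
    (hf_int : (∫ x in (0:ℝ)..vbar, f x) = 1)
    (F : ℝ → ℝ) (hF : ∀ v, F v = ∫ x in (0:ℝ)..v, f x)
    (N : ℕ) (hN : 2 ≤ N)
    (wbar : ℕ → ℝ) (g : ℕ → ℝ → ℝ)
    (hwbar : ∀ l, wbar l ∈ Set.Ioc 0 M)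
    (hg_cont : ∀ l, ContinuousOn (g l) (Set.Icc 0 (wbar l)))
    (hg_pos : ∀ l, ∀ x ∈ Set.Icc 0 (wbar l), 0 < g l x)
    (hg_int : ∀ l, (∫ x in (0:ℝ)..(wbar l), g l x) = 1)
    (G : ℕ → ℝ → ℝ)
    (hG : ∀ l x, G l x = ∫ ξ in (0:ℝ)..(min (max x 0) (wbar l)), g l ξ)
    (hmean : ∀ l, vbar ≤ ∫ x in (0:ℝ)..(wbar l), x * g l x)
    (hconv : ∀ ε ∈ Set.Ioo 0 k,
      Filter.Tendsto (fun l => G l (k - ε)) Filter.atTop (nhds 0) ∧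
      Filter.Tendsto (fun l => G l (k + ε)) Filter.atTop (nhds 1))
    (hdrain : ∀ c₁ c₂, 0 < c₁ → c₁ < c₂ → c₂ < k →
      Filter.Tendsto (fun l => (G l c₂ - G l c₁) / G l c₂) Filter.atTop (nhds 0))
    (b : ℕ → ℝ → ℝ)
    (hb_mono : ∀ l, StrictMonoOn (b l) (Set.Icc 0 vbar))
    (hb0 : ∀ l, b l 0 = 0)
    (hb_nonneg : ∀ l, ∀ v ∈ Set.Icc 0 vbar, 0 ≤ b l v)
    (heq : ∀ l, ∀ v ∈ Set.Icc 0 vbar, ∀ vtil ∈ Set.Icc 0 vbar,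
      F vtil ^ (N - 1) * ∫ ξ in (0:ℝ)..(min (b l vtil) (wbar l)), (v - ξ) * g l ξ ≤
      F v ^ (N - 1) * ∫ ξ in (0:ℝ)..(min (b l v) (wbar l)), (v - ξ) * g l ξ) :
    ∀ v ∈ Set.Ioc 0 vbar,
      Filter.Tendsto (fun l => b l v) Filter.atTop (nhds k) := by
  intro v hv
  obtain ⟨hv0, hv1⟩ := hv
  have hvI : v ∈ Icc 0 vbar := ⟨hv0.le, hv1⟩
  have hfi : ∀ s t, 0 ≤ s → s ≤ t → t ≤ vbar → IntervalIntegrable f volume s t := by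
    intro s t hs hst ht
    apply ContinuousOn.intervalIntegrable
    rw [uIcc_of_le hst]
    exact hf_cont.mono (Icc_subset_Icc hs ht)
  have hF0 : F 0 = 0 := by simp [hF]
  have hFlt : ∀ s t, 0 ≤ s → s < t → t ≤ vbar → F s < F t := by
    intro s t hs hst ht
    have e : F t - F s = ∫ x in s..t, f x := by
      rw [hF, hF]
      exact integral_interval_sub_left (hfi _ _ le_rfl (hs.trans hst.le) ht)
        (hfi _ _ le_rfl hs (hst.le.trans ht))
    have : 0 < ∫ x in s..t, f x :=
      intervalIntegral_pos_of_pos_on (hfi _ _ hs hst.le ht)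
        (fun x hx => hf_pos x ⟨hs.trans hx.1.le, hx.2.le.trans ht⟩) hst
    linarith
  have hn : N - 1 ≠ 0 := by omega
  have hGP : ∀ l x, 0 ≤ x → G l x = winProb (wbar l) (g l) x := by
    intro l x hx
    rw [hG, max_eq_left hx, winProb]
  have heq' : ∀ l, ∀ v ∈ Icc 0 vbar, ∀ t ∈ Icc 0 vbar,
      F t ^ (N - 1) * payoff (wbar l) (g l) v (b l t) ≤
      F v ^ (N - 1) * payoff (wbar l) (g l) v (b l v) := heq
  have hFv : 0 < F v := hF0 ▸ hFlt 0 v le_rfl hv0 hv1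
  have hB : 0 < F v ^ (N - 1) := pow_pos hFv _
  rw [tendsto_order]
  constructor
  · intro c₀ hc₀
    -- The threshold `c` may be raised so that it lies above `v`.
    obtain ⟨c, hcm, hck⟩ : ∃ c, max c₀ v < c ∧ c < k :=
      exists_between (max_lt hc₀ (hv1.trans_lt h2))
    obtain ⟨hc0c, hvc⟩ := max_lt_iff.1 hcm
    obtain ⟨u, hu⟩ : ∃ u, u = v / 2 := ⟨_, rfl⟩
    obtain ⟨a, ha⟩ : ∃ a, a = u / 2 := ⟨_, rfl⟩
    have hu0 : 0 < u := by linarith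
    have ha0 : 0 < a := by linarith
    have huI : u ∈ Icc 0 vbar := ⟨hu0.le, by linarith⟩
    have hAB : F u ^ (N - 1) < F v ^ (N - 1) :=
      pow_lt_pow_left₀ (hFlt u v hu0.le (by linarith) hv1)
        (hF0 ▸ hFlt 0 u le_rfl hu0 huI.2).le hn
    have hA : 0 ≤ F u ^ (N - 1) := pow_nonneg (hF0 ▸ hFlt 0 u le_rfl hu0 huI.2).le _
    obtain ⟨A, hAe⟩ : ∃ A, A = F u ^ (N - 1) := ⟨_, rfl⟩
    rw [← hAe] at hAB hA
    have hlim : Tendsto (fun l => (F v ^ (N - 1) - A) * (a - (a + c) * ((G l c - G l a) / G l c))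
        - A * (c - u) * ((G l c - G l u) / G l c)) atTop
        (nhds ((F v ^ (N - 1) - A) * (a - (a + c) * 0) - A * (c - u) * 0)) :=
      ((tendsto_const_nhds.sub ((hdrain a c ha0 (by linarith) hck).const_mul _)).const_mul _).sub
        ((hdrain u c hu0 (by linarith) hck).const_mul _)
    have hev := hlim.eventually_const_lt (u := 0) (by
      have := mul_pos (sub_pos.2 hAB) ha0
      linarith)
    filter_upwards [hev] with l hl
    by_contra hcon
    have hbv : b l v ≤ c := by linarith
    have hbu0 : 0 ≤ b l u := hb_nonneg l u huI
    have hblt : b l u < b l v := hb_mono l huI hvI (by linarith)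
    have hw := (hwbar l).1
    have hc := hg_cont l
    have hp := hg_pos l
    have hE := heq' l u huI v hvI
    rw [← hAe] at hE
    rcases le_or_gt (b l v) u with hbvu | hbvu
    · have hU := payoff_le_of_le hw hc hp hbu0 hblt.le hbvu
      have hpos := payoff_pos hw hc hp (hbu0.trans_lt hblt) hbvu
      have s1 := mul_le_mul_of_nonneg_left hU hA
      have s2 := mul_lt_mul_of_pos_right hAB hpos
      linarith
    · have hU1 := payoff_le_self hw hc hp hu0.le hbu0
      have hU2 := payoff_le_of_ge hw hc hp (hu0.trans hbvu).le hbv hbvu.le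
      have h3 := (payoff_bounds hw hc hp u hu0.le (by linarith : u ≤ c)).2.1
      obtain ⟨h40, h41, -⟩ := payoff_bounds hw hc hp u ha0.le (by linarith : a ≤ c)
      have h5 := (payoff_bounds hw hc hp u le_rfl ha0.le).2.1
      rw [winProb_zero hw, payoff_zero hw, sub_zero, sub_zero] at h5
      have hPc : 0 < winProb (wbar l) (g l) c := winProb_pos hw hc hp (by linarith)
      rw [hGP l c (by linarith), hGP l a ha0.le, hGP l u hu0.le] at hl
      generalize winProb (wbar l) (g l) c = Pc at *
      generalize winProb (wbar l) (g l) a = Pa at *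
      generalize winProb (wbar l) (g l) u = Pu at *
      have hl' := mul_pos hl hPc
      have e : ((F v ^ (N - 1) - A) * (a - (a + c) * ((Pc - Pa) / Pc))
          - A * (c - u) * ((Pc - Pu) / Pc)) * Pc
          = (F v ^ (N - 1) - A) * (a * Pc - (a + c) * (Pc - Pa)) - A * (c - u) * (Pc - Pu) := by
        field_simp
      rw [e] at hl'
      have hUc : a * Pc - (a + c) * (Pc - Pa) ≤ payoff (wbar l) (g l) u c := by
        have hua : u = 2 * a := by linarith
        have := mul_nonneg hu0.le h40
        have e1 : (u - a) * Pa = a * Pa := by rw [hua]; ring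
        linarith
      have s1 := mul_le_mul_of_nonneg_left hU1 hA
      have s2 := mul_le_mul_of_nonneg_left hU2 hB.le
      have s3 := mul_le_mul_of_nonneg_left h3 hA
      have s4 := mul_le_mul_of_nonneg_left hUc (sub_pos.2 hAB).le
      linarith
  · intro d₀ hd₀
    obtain ⟨d, hkd, hdm⟩ : ∃ d, k < d ∧ d < min d₀ (2 * k) :=
      exists_between (lt_min hd₀ (by linarith))
    obtain ⟨hdd, hdk⟩ := lt_min_iff.1 hdm
    obtain ⟨m, hvm, hmk⟩ : ∃ m, v < m ∧ m < k := exists_between (hv1.trans_lt h2)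
    have hGm : Tendsto (fun l => G l m) atTop (nhds 0) := by
      simpa using (hconv (k - m) ⟨by linarith, by linarith⟩).1
    have hGd : Tendsto (fun l => G l d) atTop (nhds 1) := by
      simpa using (hconv (d - k) ⟨by linarith, by linarith⟩).2
    have hlim : Tendsto (fun l => v * G l m + (v - m) * (G l d - G l m)) atTop
        (nhds (v * 0 + (v - m) * (1 - 0))) :=
      (hGm.const_mul v).add ((hGd.sub hGm).const_mul _)
    filter_upwards [hlim.eventually_lt_const (u := 0) (by linarith)] with l hl
    by_contra hcon
    have hdb : d ≤ b l v := by linarith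
    have hw := (hwbar l).1
    have hc := hg_cont l
    have hp := hg_pos l
    have hE := heq' l v hvI 0 ⟨le_rfl, h1.le⟩
    rw [hF0, zero_pow hn, zero_mul] at hE
    have hU0 := nonneg_of_mul_nonneg_right hE hB
    have hU1 := payoff_le_of_ge hw hc hp (by linarith : 0 ≤ d) hdb (by linarith : v ≤ d)
    have h3 := (payoff_bounds hw hc hp v (by linarith : 0 ≤ m) (by linarith : m ≤ d)).2.2
    have h4 := (payoff_bounds hw hc hp v le_rfl (by linarith : 0 ≤ m)).2.2
    rw [winProb_zero hw, payoff_zero hw, sub_zero, sub_zero, sub_zero] at h4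
    rw [hGP l m (by linarith), hGP l d (by linarith)] at hl
    linarith
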